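/- arXiv:1004.2484 — 4 statements merged into one kernel-verified Lean document; each statement's English description precedes it below -/
import Mathlib

section
/- The forward and reverse achievable rate regions of a B-MAC network coincide: R_Φ(P_T) = R̂_{Φ^T}(P_T). -/
open Matrix ComplexOrder

noncomputable section

/-- Forward interference-plus-noise covariance of link `l` in a B-MAC network. -/
def bmacOmega {L : ℕ} (m n : Fin L → ℕ)
    (H : ∀ l k : Fin L, Matrix (Fin (n l)) (Fin (m k)) ℂ)
    (Φ : Fin L → Fin L → ℝ)
    (S : ∀ k : Fin L, Matrix (Fin (m k)) (Fin (m k)) ℂ) (l : Fin L) :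
    Matrix (Fin (n l)) (Fin (n l)) ℂ :=
  1 + ∑ k : Fin L, Φ l k • (H l k * S k * (H l k)ᴴ)

/-- Forward rate of link `l`. -/
def bmacRate {L : ℕ} (m n : Fin L → ℕ)
    (H : ∀ l k : Fin L, Matrix (Fin (n l)) (Fin (m k)) ℂ)
    (Φ : Fin L → Fin L → ℝ)
    (S : ∀ k : Fin L, Matrix (Fin (m k)) (Fin (m k)) ℂ) (l : Fin L) : ℝ :=
  Real.log ((bmacOmega m n H Φ S l + H l l * S l * (H l l)ᴴ).det.re)
    - Real.log ((bmacOmega m n H Φ S l).det.re)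

/-- Achievable rate region under a sum power constraint. -/
def bmacRegion {L : ℕ} (m n : Fin L → ℕ)
    (H : ∀ l k : Fin L, Matrix (Fin (n l)) (Fin (m k)) ℂ)
    (Φ : Fin L → Fin L → ℝ) (PT : ℝ) : Set (Fin L → ℝ) :=
  {r | (∀ l, 0 ≤ r l) ∧
    ∃ S : ∀ k : Fin L, Matrix (Fin (m k)) (Fin (m k)) ℂ,
      (∀ k, (S k).PosSemidef) ∧
      (∑ l, (Matrix.trace (S l)).re) ≤ PT ∧
      ∀ l, r l ≤ bmacRate m n H Φ S l}

/-!
A covariance matrix is a sum of rank-one streams, and by the chain rule for `log det` the rate of a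
link is `∑ log (1 + SINR)` over its streams, when they are decoded successively with MMSE filters.
So it suffices to match the SINR of every stream in the reverse network without using more power.

Use the forward MMSE filters `w s` as reverse transmit directions, with powers `q s` balancing, for
every stream, the reverse noise seen along the forward direction `x s` against the forward noise
seen by `w s`. These equations are linear in `q` with a diagonally dominant M-matrix, hence have a
nonnegative solution, and summing them shows that the total power is conserved. With these powers
the filter `x s` attains the forward SINR of stream `s`, so by Cauchy–Schwarz the MMSE filter does
at least as well. Decoding in the opposite order in the reverse network turns the coupling between
streams into its transpose.
-/

section QuadraticForms

variable {𝕜 ι κ : Type*} [RCLike 𝕜]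

lemma posSemidef_sum_vecMulVec_star [Finite ι] (s : Finset κ) (x : κ → ι → 𝕜) :
    (∑ i ∈ s, vecMulVec (x i) (star (x i))).PosSemidef :=
  posSemidef_sum s fun i _ => posSemidef_vecMulVec_self_star (x i)

variable [Fintype ι]

lemma star_dotProduct_vecMulVec_star_mulVec (v w : ι → 𝕜) :
    star v ⬝ᵥ vecMulVec w (star w) *ᵥ v = (‖star v ⬝ᵥ w‖ : 𝕜) ^ 2 := by
  rw [vecMulVec_mulVec, op_smul_eq_smul, dotProduct_smul, star_dotProduct w v, smul_eq_mul,
    RCLike.star_def, RCLike.conj_mul]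

lemma norm_star_dotProduct_conjTranspose_mulVec [Fintype κ] (M : Matrix ι κ 𝕜) (v : κ → 𝕜)
    (w : ι → 𝕜) : ‖star v ⬝ᵥ Mᴴ *ᵥ w‖ = ‖star w ⬝ᵥ M *ᵥ v‖ := by
  rw [star_dotProduct, norm_star, star_mulVec, conjTranspose_conjTranspose, dotProduct_mulVec]

lemma re_star_sqrt_smul_dotProduct_self (w : ι → 𝕜) {q : ℝ} (hq : 0 ≤ q) :
    RCLike.re (star (√q • w) ⬝ᵥ (√q • w)) = q * RCLike.re (star w ⬝ᵥ w) := by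
  rw [star_smul, star_trivial, smul_dotProduct, dotProduct_smul, smul_smul, Real.mul_self_sqrt hq,
    RCLike.smul_re]

lemma norm_star_dotProduct_conjTranspose_mulVec_sqrt_smul_sq [Fintype κ] (M : Matrix ι κ 𝕜)
    (v : κ → 𝕜) (w : ι → 𝕜) {q : ℝ} (hq : 0 ≤ q) :
    ‖star v ⬝ᵥ Mᴴ *ᵥ (√q • w)‖ ^ 2 = q * ‖star w ⬝ᵥ M *ᵥ v‖ ^ 2 := by
  rw [mulVec_smul, dotProduct_smul, norm_smul, mul_pow, norm_star_dotProduct_conjTranspose_mulVec,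
    Real.norm_of_nonneg (Real.sqrt_nonneg q), Real.sq_sqrt hq]

lemma mul_vecMulVec_star_mul_conjTranspose (M : Matrix κ ι 𝕜) (v : ι → 𝕜) :
    M * vecMulVec v (star v) * Mᴴ = vecMulVec (M *ᵥ v) (star (M *ᵥ v)) := by
  rw [mul_vecMulVec, vecMulVec_mul, star_mulVec]

lemma norm_star_dotProduct_mulVec_sq_le {A : Matrix ι ι 𝕜} (hA : A.PosSemidef) (v w : ι → 𝕜) :
    ‖star v ⬝ᵥ A *ᵥ w‖ ^ 2 ≤
      RCLike.re (star v ⬝ᵥ A *ᵥ v) * RCLike.re (star w ⬝ᵥ A *ᵥ w) := by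
  let _ := A.toSeminormedAddCommGroup hA
  let _ := A.toInnerProductSpace hA
  have h := inner_mul_inner_self_le (𝕜 := 𝕜) v w
  rw [norm_inner_symm w v, ← sq] at h
  change ‖(A *ᵥ w) ⬝ᵥ star v‖ ^ 2 ≤
    RCLike.re ((A *ᵥ v) ⬝ᵥ star v) * RCLike.re ((A *ᵥ w) ⬝ᵥ star w) at h
  simpa only [dotProduct_comm] using h

lemma mulVec_nonsing_inv_mulVec {R : Type*} [CommRing R] [DecidableEq ι] {A : Matrix ι ι R}
    (hA : IsUnit A.det) (v : ι → R) : A *ᵥ (A⁻¹ *ᵥ v) = v := by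
  rw [mulVec_mulVec, mul_nonsing_inv _ hA, one_mulVec]

lemma norm_star_dotProduct_sq_le [DecidableEq ι] {A : Matrix ι ι 𝕜} (hA : A.PosDef) (v h : ι → 𝕜) :
    ‖star v ⬝ᵥ h‖ ^ 2 ≤
      RCLike.re (star v ⬝ᵥ A *ᵥ v) * RCLike.re (star h ⬝ᵥ A⁻¹ *ᵥ h) := by
  have key := norm_star_dotProduct_mulVec_sq_le hA.posSemidef v (A⁻¹ *ᵥ h)
  rwa [mulVec_nonsing_inv_mulVec hA.det_pos.ne'.isUnit, star_dotProduct (A⁻¹ *ᵥ h) h,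
    RCLike.star_def, RCLike.conj_re] at key

end QuadraticForms

section Determinant

lemma det_add_vecMulVec {R ι : Type*} [CommRing R] [Fintype ι] [DecidableEq ι] {A : Matrix ι ι R}
    (hA : IsUnit A.det) (u v : ι → R) :
    (A + vecMulVec u v).det = A.det * (1 + v ⬝ᵥ A⁻¹ *ᵥ u) := by
  rw [vecMulVec_eq Unit, det_add_replicateCol_mul_replicateRow hA, Matrix.mul_assoc,
    ← replicateCol_mulVec, det_unique (n := Unit), Matrix.add_apply, one_apply_eq,
    replicateRow_mul_replicateCol_apply]

variable {𝕜 ι κ : Type*} [RCLike 𝕜] [Fintype ι] [DecidableEq ι]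

lemma re_det_pos {A : Matrix ι ι 𝕜} (hA : A.PosDef) : 0 < RCLike.re A.det :=
  (RCLike.pos_iff.mp hA.det_pos).1

lemma log_re_det_add_vecMulVec_star {A : Matrix ι ι 𝕜} (hA : A.PosDef) (v : ι → 𝕜) :
    Real.log (RCLike.re (A + vecMulVec v (star v)).det) =
      Real.log (RCLike.re A.det) + Real.log (1 + RCLike.re (star v ⬝ᵥ A⁻¹ *ᵥ v)) := by
  have hform : 0 ≤ RCLike.re (star v ⬝ᵥ A⁻¹ *ᵥ v) := hA.inv.posSemidef.re_dotProduct_nonneg v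
  rw [det_add_vecMulVec hA.det_pos.ne'.isUnit, RCLike.mul_re,
    (RCLike.pos_iff.mp hA.det_pos).2, zero_mul, sub_zero, map_add, RCLike.one_re,
    Real.log_mul (re_det_pos hA).ne' (by positivity)]

lemma log_re_det_add_sum_vecMulVec_star [LinearOrder κ] {A : Matrix ι ι 𝕜}
    (hA : A.PosDef) (x : κ → ι → 𝕜) (s : Finset κ) :
    Real.log (RCLike.re (A + ∑ i ∈ s, vecMulVec (x i) (star (x i))).det) =
      Real.log (RCLike.re A.det) + ∑ i ∈ s, Real.log (1 + RCLike.re (star (x i) ⬝ᵥ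
        (A + ∑ j ∈ s with j < i, vecMulVec (x j) (star (x j)))⁻¹ *ᵥ x i)) := by
  induction s using Finset.induction_on_max with
  | empty => simp
  | insert a s hs ih =>
    have ha : a ∉ s := fun h => lt_irrefl a (hs a h)
    have hfilter_max : (insert a s).filter (· < a) = s := by
      rw [Finset.filter_insert, if_neg (lt_irrefl a), Finset.filter_true_of_mem hs]
    have hfilter : ∀ i ∈ s, (insert a s).filter (· < i) = s.filter (· < i) := fun i hi => by
      rw [Finset.filter_insert, if_neg (hs i hi).not_gt]
    rw [Finset.sum_insert ha, Finset.sum_insert ha, hfilter_max, add_comm (vecMulVec _ _),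
      ← add_assoc, log_re_det_add_vecMulVec_star
        (hA.add_posSemidef (posSemidef_sum_vecMulVec_star s x)), ih, add_assoc,
      add_comm (Finset.sum _ _)]
    congr 2
    exact Finset.sum_congr rfl fun i hi => by rw [hfilter i hi]

end Determinant

section PowerControl

variable {σ : Type*} [Fintype σ]

lemma det_ne_zero_of_offDiag_nonpos [DecidableEq σ] {M : Matrix σ σ ℝ}
    (hoff : ∀ i j, i ≠ j → M i j ≤ 0) (hrow : ∀ i, 0 < ∑ j, M i j) : M.det ≠ 0 := by
  refine det_ne_zero_of_sum_row_lt_diag fun i => ?_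
  have hnorm : ∑ j ∈ Finset.univ.erase i, ‖M i j‖ = -∑ j ∈ Finset.univ.erase i, M i j := by
    rw [← Finset.sum_neg_distrib]
    exact Finset.sum_congr rfl fun j hj =>
      Real.norm_of_nonpos (hoff i j (Finset.ne_of_mem_erase hj).symm)
  have hsplit := Finset.add_sum_erase Finset.univ (M i) (Finset.mem_univ i)
  linarith [hrow i, Real.le_norm_self (M i i)]

lemma vecMul_apply_nonpos_of_offDiag_nonpos {M : Matrix σ σ ℝ}
    (hoff : ∀ i j, i ≠ j → M i j ≤ 0) {a : σ → ℝ} (ha : 0 ≤ a) {j : σ} (haj : a j = 0) :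
    (a ᵥ* M) j ≤ 0 :=
  Finset.sum_nonpos fun i _ => by
    rcases eq_or_ne i j with rfl | hij
    · simp [haj]
    · exact mul_nonpos_of_nonneg_of_nonpos (ha i) (hoff i j hij)

lemma nonneg_of_vecMul_nonneg {M : Matrix σ σ ℝ}
    (hoff : ∀ i j, i ≠ j → M i j ≤ 0) (hrow : ∀ i, 0 < ∑ j, M i j)
    {q : σ → ℝ} (hq : 0 ≤ q ᵥ* M) : 0 ≤ q := by
  have hcol : ∀ j, (q⁻ ᵥ* M) j ≤ 0 := fun j => by
    rcases le_total 0 (q j) with hj | hj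
    · exact vecMul_apply_nonpos_of_offDiag_nonpos hoff (negPart_nonneg q) (by simp [hj])
    · have hpos : (q⁺ ᵥ* M) j ≤ 0 :=
        vecMul_apply_nonpos_of_offDiag_nonpos hoff (posPart_nonneg q) (by simp [hj])
      have hsub : (q⁺ ᵥ* M) j - (q⁻ ᵥ* M) j = (q ᵥ* M) j := by
        rw [← Pi.sub_apply, ← sub_vecMul, posPart_sub_negPart]
      have hqj : 0 ≤ (q ᵥ* M) j := hq j
      linarith
  have hterm : ∀ i ∈ Finset.univ, 0 ≤ q⁻ i * ∑ j, M i j := fun i _ =>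
    mul_nonneg (negPart_nonneg q i) (hrow i).le
  -- The entries of `q⁻ ᵥ* M` are nonpositive, but their sum weighs `q⁻` by positive row sums.
  have hsum : ∑ i, q⁻ i * ∑ j, M i j ≤ 0 := by
    simp only [Finset.mul_sum]
    rw [Finset.sum_comm]
    exact Finset.sum_nonpos fun j _ => hcol j
  have hzero : ∀ i, q⁻ i * ∑ j, M i j = 0 := fun i =>
    (Finset.sum_eq_zero_iff_of_nonneg hterm).mp (hsum.antisymm (Finset.sum_nonneg hterm)) i
      (Finset.mem_univ i)
  exact negPart_eq_zero.mp
    (funext fun i => (mul_eq_zero.mp (hzero i)).resolve_right (hrow i).ne')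

lemma exists_dual_power {G : σ → σ → ℝ} (hG : ∀ s s', 0 ≤ G s s') {N P : σ → ℝ}
    (hN : ∀ s, 0 < N s) (hP : 0 ≤ P) :
    ∃ q : σ → ℝ, 0 ≤ q ∧
      (∀ s, P s + ∑ s', G s' s * q s' = q s * (N s + ∑ s', G s s')) ∧
      ∑ s, q s * N s = ∑ s, P s := by
  classical
  -- The balance equations read `q ᵥ* M = P`; the row sums of `M` are `N`, whence the sum identity.
  let M : Matrix σ σ ℝ := diagonal (fun s => N s + ∑ s', G s s') - of G
  have hoff : ∀ s s', s ≠ s' → M s s' ≤ 0 := fun s s' h => by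
    simp [M, diagonal_apply_ne _ h, hG s s']
  have hrow : ∀ s, ∑ s', M s s' = N s := fun s => by simp [M, diagonal_apply]
  have hrow_pos : ∀ s, 0 < ∑ s', M s s' := fun s => hrow s ▸ hN s
  obtain ⟨q, hqM⟩ : ∃ q, q ᵥ* M = P := ⟨P ᵥ* M⁻¹, by
    rw [vecMul_vecMul, nonsing_inv_mul _ (det_ne_zero_of_offDiag_nonpos hoff hrow_pos).isUnit,
      vecMul_one]⟩
  refine ⟨q, nonneg_of_vecMul_nonneg hoff hrow_pos (hqM ▸ hP), fun s => ?_, ?_⟩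
  · rw [← hqM, vecMul_sub, Pi.sub_apply, vecMul_diagonal, sub_add_eq_add_sub, add_sub_assoc,
      add_eq_left, sub_eq_zero]
    exact Finset.sum_congr rfl fun s' _ => mul_comm _ _
  · simp only [← hqM, ← hrow, Finset.mul_sum, vecMul, dotProduct]
    exact Finset.sum_comm

end PowerControl

section StreamNetwork

variable {𝕜 σ : Type*} [RCLike 𝕜] [Fintype σ] {μ ν : σ → Type*} [∀ s, Fintype (μ s)]
  [∀ s, DecidableEq (ν s)]

/-- Interference-plus-noise covariance at the receiver of stream `s` in a network of rank-one
streams: stream `s'` is sent with covariance `x s' (x s')†`, so that the transmit power is absorbed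
in `x s'`, and it interferes with `s` with strength `C s s'` through the channel `H s s'`. -/
def streamNoise (C : σ → σ → ℝ) (H : ∀ s s', Matrix (ν s) (μ s') 𝕜) (x : ∀ s, μ s → 𝕜) (s : σ) :
    Matrix (ν s) (ν s) 𝕜 :=
  1 + ∑ s', C s s' • vecMulVec (H s s' *ᵥ x s') (star (H s s' *ᵥ x s'))

lemma posDef_streamNoise [∀ s, Finite (ν s)] {C : σ → σ → ℝ} (hC : ∀ s s', 0 ≤ C s s')
    (H : ∀ s s', Matrix (ν s) (μ s') 𝕜) (x : ∀ s, μ s → 𝕜) (s : σ) :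
    (streamNoise C H x s).PosDef :=
  PosDef.one.add_posSemidef (posSemidef_sum _ fun s' _ =>
    (posSemidef_vecMulVec_self_star _).smul (hC s s'))

variable [∀ s, Fintype (ν s)]

/-- MMSE receive filter of stream `s`, unnormalized: it attains the largest
signal-to-interference-plus-noise ratio among all linear filters. -/
def mmseReceiver (C : σ → σ → ℝ) (H : ∀ s s', Matrix (ν s) (μ s') 𝕜) (x : ∀ s, μ s → 𝕜) (s : σ) :
    ν s → 𝕜 :=
  (streamNoise C H x s)⁻¹ *ᵥ (H s s *ᵥ x s)

/-- Signal-to-interference-plus-noise ratio of stream `s` under the filter `mmseReceiver`. -/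
def mmseSinr (C : σ → σ → ℝ) (H : ∀ s s', Matrix (ν s) (μ s') 𝕜) (x : ∀ s, μ s → 𝕜) (s : σ) : ℝ :=
  RCLike.re (star (H s s *ᵥ x s) ⬝ᵥ mmseReceiver C H x s)

variable (C : σ → σ → ℝ) (H : ∀ s s', Matrix (ν s) (μ s') 𝕜) (x : ∀ s, μ s → 𝕜) (s : σ)

lemma mmseSinr_nonneg {C : σ → σ → ℝ} (hC : ∀ s s', 0 ≤ C s s') : 0 ≤ mmseSinr C H x s :=
  (posDef_streamNoise hC H x s).inv.posSemidef.re_dotProduct_nonneg _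

lemma re_star_mmseReceiver_dotProduct_streamNoise_mulVec {C : σ → σ → ℝ}
    (hC : ∀ s s', 0 ≤ C s s') :
    RCLike.re (star (mmseReceiver C H x s) ⬝ᵥ streamNoise C H x s *ᵥ mmseReceiver C H x s) =
      mmseSinr C H x s := by
  rw [mmseSinr, star_dotProduct (H s s *ᵥ x s), RCLike.star_def, RCLike.conj_re]
  conv_lhs => rw [mmseReceiver, mulVec_nonsing_inv_mulVec
    (posDef_streamNoise hC H x s).det_pos.ne'.isUnit, ← mmseReceiver]

lemma mmseSinr_le_norm_star_mmseReceiver_dotProduct :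
    mmseSinr C H x s ≤ ‖star (mmseReceiver C H x s) ⬝ᵥ H s s *ᵥ x s‖ := by
  rw [mmseSinr, star_dotProduct, RCLike.star_def, RCLike.conj_re]
  exact RCLike.re_le_norm _

lemma re_star_dotProduct_streamNoise_mulVec (v : ν s → 𝕜) :
    RCLike.re (star v ⬝ᵥ streamNoise C H x s *ᵥ v) =
      RCLike.re (star v ⬝ᵥ v) + ∑ s', C s s' * ‖star v ⬝ᵥ H s s' *ᵥ x s'‖ ^ 2 := by
  simp only [streamNoise, add_mulVec, one_mulVec, sum_mulVec, smul_mulVec, dotProduct_add,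
    dotProduct_sum, dotProduct_smul, star_dotProduct_vecMulVec_star_mulVec, map_add, map_sum,
    RCLike.smul_re, ← RCLike.ofReal_pow, RCLike.ofReal_re]

variable {C H x}

lemma exists_power_streamNoise_balanced [∀ s, DecidableEq (μ s)] (hC : ∀ s s', 0 ≤ C s s')
    (w : ∀ s, ν s → 𝕜) :
    ∃ q : σ → ℝ, 0 ≤ q ∧
      ∑ s, q s * RCLike.re (star (w s) ⬝ᵥ w s) ≤ ∑ s, RCLike.re (star (x s) ⬝ᵥ x s) ∧
      ∀ s, w s ≠ 0 →
        RCLike.re (star (x s) ⬝ᵥ streamNoise (fun s s' => C s' s) (fun s s' => (H s' s)ᴴ)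
          (fun s => √(q s) • w s) s *ᵥ x s) =
        q s * RCLike.re (star (w s) ⬝ᵥ streamNoise C H x s *ᵥ w s) := by
  classical
  -- `exists_dual_power` needs positive weights, so zero filters get the arbitrary weight `1`.
  let N : σ → ℝ := fun s => if w s = 0 then 1 else RCLike.re (star (w s) ⬝ᵥ w s)
  have hN : ∀ s, 0 < N s := fun s => by
    by_cases hw : w s = 0
    · simp [N, hw]
    · simpa [N, hw] using (RCLike.pos_iff.mp (dotProduct_star_self_pos_iff.mpr hw)).1
  obtain ⟨q, hq, hbal, hpow⟩ := exists_dual_power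
    (G := fun s s' => C s s' * ‖star (w s) ⬝ᵥ H s s' *ᵥ x s'‖ ^ 2)
    (P := fun s => RCLike.re (star (x s) ⬝ᵥ x s))
    (fun s s' => mul_nonneg (hC s s') (sq_nonneg _)) hN
    (fun s => (RCLike.nonneg_iff.mp (dotProduct_star_self_nonneg (x s))).1)
  refine ⟨q, hq, hpow ▸ Finset.sum_le_sum fun s _ => mul_le_mul_of_nonneg_left ?_ (hq s),
    fun s hw => ?_⟩
  · by_cases hw : w s = 0 <;> simp [N, hw]
  · rw [re_star_dotProduct_streamNoise_mulVec, re_star_dotProduct_streamNoise_mulVec]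
    have h := hbal s
    simp only [N, if_neg hw] at h
    rw [← h]
    congr 1
    exact Finset.sum_congr rfl fun s' _ => by
      rw [norm_star_dotProduct_conjTranspose_mulVec_sqrt_smul_sq _ _ _ (hq s'), mul_left_comm,
        mul_assoc, mul_left_comm, mul_comm (q s')]

theorem exists_mmseSinr_le_reverse [∀ s, DecidableEq (μ s)] (hC : ∀ s s', 0 ≤ C s s') :
    ∃ y : ∀ s, ν s → 𝕜,
      ∑ s, RCLike.re (star (y s) ⬝ᵥ y s) ≤ ∑ s, RCLike.re (star (x s) ⬝ᵥ x s) ∧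
      ∀ s, mmseSinr C H x s ≤
        mmseSinr (fun s s' => C s' s) (fun s s' => (H s' s)ᴴ) y s := by
  let w := mmseReceiver C H x
  obtain ⟨q, hq, hpow, hbal⟩ := exists_power_streamNoise_balanced (x := x) (H := H) hC w
  have hCrev : ∀ s s', 0 ≤ C s' s := fun s s' => hC s' s
  refine ⟨fun s => √(q s) • w s, (Finset.sum_congr rfl fun s _ =>
    re_star_sqrt_smul_dotProduct_self (w s) (hq s)).trans_le hpow, fun s => ?_⟩
  rcases (mmseSinr_nonneg H x s hC).eq_or_lt with hzero | hpos
  · exact hzero ▸ mmseSinr_nonneg _ _ s hCrev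
  have hw : w s ≠ 0 := fun hw =>
    hpos.ne' (by simp [mmseSinr, show mmseReceiver C H x s = 0 from hw])
  have hx : x s ≠ 0 := fun hx => hpos.ne' (by simp [mmseSinr, hx])
  have hB := posDef_streamNoise hCrev (fun s s' => (H s' s)ᴴ) (fun s => √(q s) • w s) s
  have hbal_pos := hB.re_dotProduct_pos hx
  have hcs := norm_star_dotProduct_sq_le hB (x s) ((H s s)ᴴ *ᵥ (√(q s) • w s))
  rw [hbal s hw, re_star_mmseReceiver_dotProduct_streamNoise_mulVec H x s hC] at hcs hbal_pos
  rw [norm_star_dotProduct_conjTranspose_mulVec_sqrt_smul_sq _ _ _ (hq s)] at hcs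
  refine le_of_mul_le_mul_left ?_ hbal_pos
  calc q s * mmseSinr C H x s * mmseSinr C H x s
      = q s * mmseSinr C H x s ^ 2 := by ring
    _ ≤ q s * ‖star (w s) ⬝ᵥ H s s *ᵥ x s‖ ^ 2 :=
        mul_le_mul_of_nonneg_left (pow_le_pow_left₀ hpos.le
          (mmseSinr_le_norm_star_mmseReceiver_dotProduct C H x s) 2) (hq s)
    _ ≤ _ := hcs

end StreamNetwork

section BMac

variable {L : ℕ} {κ : Fin L → Type*} {d m n : Fin L → ℕ}

section LinkCov

variable [∀ k, Fintype (κ k)]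

/-- Transmit covariance of link `k` when it sends the streams `x ⟨k, i⟩`, whose powers are absorbed
in the vectors. The streams of the whole network are indexed by `Σ k, κ k`. -/
def linkCov (x : ∀ s : Σ k, κ k, Fin (d s.1) → ℂ) (k : Fin L) : Matrix (Fin (d k)) (Fin (d k)) ℂ :=
  ∑ i, vecMulVec (x ⟨k, i⟩) (star (x ⟨k, i⟩))

lemma posSemidef_linkCov (x : ∀ s : Σ k, κ k, Fin (d s.1) → ℂ) (k : Fin L) :
    (linkCov x k).PosSemidef :=
  posSemidef_sum_vecMulVec_star (ι := Fin (d k)) Finset.univ fun i => x ⟨k, i⟩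

lemma sum_re_trace_linkCov (x : ∀ s : Σ k, κ k, Fin (d s.1) → ℂ) :
    ∑ k, (trace (linkCov x k)).re = ∑ s, RCLike.re (star (x s) ⬝ᵥ x s) := by
  simp only [linkCov, trace_sum, trace_vecMulVec, Complex.re_sum, Fintype.sum_sigma,
    RCLike.re_eq_complex_re, dotProduct_comm]

lemma mul_linkCov_mul_conjTranspose {b : ℕ} {k : Fin L} (M : Matrix (Fin b) (Fin (d k)) ℂ)
    (x : ∀ s : Σ k, κ k, Fin (d s.1) → ℂ) :
    M * linkCov x k * Mᴴ = ∑ i, vecMulVec (M *ᵥ x ⟨k, i⟩) (star (M *ᵥ x ⟨k, i⟩)) := by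
  simp only [linkCov, Matrix.mul_sum, Matrix.sum_mul, mul_vecMulVec_star_mul_conjTranspose]

end LinkCov

lemma exists_eq_linkCov {S : ∀ k, Matrix (Fin (d k)) (Fin (d k)) ℂ} (hS : ∀ k, (S k).PosSemidef) :
    ∃ (c : Fin L → ℕ) (x : ∀ s : Σ k, Fin (c k), Fin (d s.1) → ℂ), linkCov x = S := by
  choose c x hx using fun k => posSemidef_iff_eq_sum_vecMulVec.mp (hS k)
  exact ⟨c, fun s => x s.1 s.2, funext fun k => (hx k).symm⟩

lemma posDef_bmacOmega {Φ : Fin L → Fin L → ℝ} (hΦ : ∀ l k, 0 ≤ Φ l k)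
    (H : ∀ l k, Matrix (Fin (n l)) (Fin (m k)) ℂ)
    {S : ∀ k, Matrix (Fin (m k)) (Fin (m k)) ℂ} (hS : ∀ k, (S k).PosSemidef) (l : Fin L) :
    (bmacOmega m n H Φ S l).PosDef :=
  PosDef.one.add_posSemidef (posSemidef_sum _ fun k _ =>
    ((hS k).mul_mul_conjTranspose_same (H l k)).smul (hΦ l k))

section SicCoupling

variable [∀ k, LT (κ k)]

open Classical in
/-- Coupling of the streams under successive interference cancellation: streams of links `l`, `k`
interfere with strength `Φ l k`, and within a link each stream moreover sees the earlier ones.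
The order on the sigma type is the disjoint sum, so `s' < s` forces `s'.1 = s.1`. -/
def sicCoupling (Φ : Fin L → Fin L → ℝ) (s s' : Σ k, κ k) : ℝ :=
  Φ s.1 s'.1 + if s' < s then 1 else 0

lemma sicCoupling_nonneg {Φ : Fin L → Fin L → ℝ} (hΦ : ∀ l k, 0 ≤ Φ l k) (s s' : Σ k, κ k) :
    0 ≤ sicCoupling Φ s s' :=
  add_nonneg (hΦ _ _) (by split_ifs <;> simp)

lemma sicCoupling_orderDual (Φ : Fin L → Fin L → ℝ) :
    sicCoupling (κ := fun k => (κ k)ᵒᵈ) (fun l k => Φ k l) =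
      fun s s' : Σ k, κ k => sicCoupling Φ s' s := by
  classical
  funext ⟨l, i⟩ ⟨k, j⟩
  have hlt : (⟨k, j⟩ : Σ k, (κ k)ᵒᵈ) < ⟨l, i⟩ ↔ (⟨l, i⟩ : Σ k, κ k) < ⟨k, j⟩ :=
    ⟨fun ⟨_, _, _, h⟩ => ⟨_, _, _, h⟩, fun ⟨_, _, _, h⟩ => ⟨_, _, _, h⟩⟩
  exact congrArg (Φ k l + ·) (if_congr hlt rfl rfl)

end SicCoupling

variable [∀ k, LinearOrder (κ k)] [∀ k, Fintype (κ k)]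

lemma streamNoise_sicCoupling (H : ∀ l k, Matrix (Fin (n l)) (Fin (m k)) ℂ)
    (Φ : Fin L → Fin L → ℝ) (x : ∀ s : Σ k, κ k, Fin (m s.1) → ℂ) (l : Fin L) (i : κ l) :
    streamNoise (sicCoupling Φ) (fun s s' => H s.1 s'.1) x ⟨l, i⟩ =
      bmacOmega m n H Φ (linkCov x) l +
        ∑ j with j < i, vecMulVec (H l l *ᵥ x ⟨l, j⟩) (star (H l l *ᵥ x ⟨l, j⟩)) := by
  simp only [streamNoise, bmacOmega, sicCoupling, add_smul, Finset.sum_add_distrib,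
    mul_linkCov_mul_conjTranspose, Finset.smul_sum, ← add_assoc, Fintype.sum_sigma]
  congr 1
  rw [Finset.sum_eq_single l, Finset.sum_filter]
  · simp only [Sigma.mk_lt_mk_iff, ite_smul, one_smul, zero_smul]
  · intro k _ hkl
    refine Finset.sum_eq_zero fun j _ => ?_
    rw [if_neg, zero_smul]
    rintro ⟨⟩
    exact hkl rfl
  · simp

lemma bmacRate_linkCov {Φ : Fin L → Fin L → ℝ} (hΦ : ∀ l k, 0 ≤ Φ l k)
    (H : ∀ l k, Matrix (Fin (n l)) (Fin (m k)) ℂ) (x : ∀ s : Σ k, κ k, Fin (m s.1) → ℂ)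
    (l : Fin L) :
    bmacRate m n H Φ (linkCov x) l =
      ∑ i, Real.log (1 + mmseSinr (sicCoupling Φ) (fun s s' => H s.1 s'.1) x ⟨l, i⟩) := by
  have hchain := log_re_det_add_sum_vecMulVec_star (posDef_bmacOmega hΦ H (posSemidef_linkCov x) l)
    (fun i => H l l *ᵥ x ⟨l, i⟩) Finset.univ
  simp only [← streamNoise_sicCoupling] at hchain
  rw [bmacRate, mul_linkCov_mul_conjTranspose, sub_eq_iff_eq_add']
  exact hchain

lemma bmacRate_linkCov_reverse {Φ : Fin L → Fin L → ℝ} (hΦ : ∀ l k, 0 ≤ Φ l k)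
    (H : ∀ l k, Matrix (Fin (n l)) (Fin (m k)) ℂ) (y : ∀ s : Σ k, κ k, Fin (n s.1) → ℂ)
    (l : Fin L) :
    bmacRate n m (fun l k => (H k l)ᴴ) (fun l k => Φ k l) (linkCov y) l =
      ∑ i, Real.log (1 + mmseSinr (fun s s' => sicCoupling Φ s' s)
        (fun s s' => (H s'.1 s.1)ᴴ) y ⟨l, i⟩) := by
  rw [← sicCoupling_orderDual]
  exact bmacRate_linkCov (κ := fun k => (κ k)ᵒᵈ) (fun l k => hΦ k l) (fun l k => (H k l)ᴴ) y l

end BMac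

lemma bmacRegion_subset_reverse {L : ℕ} (m n : Fin L → ℕ)
    (H : ∀ l k : Fin L, Matrix (Fin (n l)) (Fin (m k)) ℂ)
    {Φ : Fin L → Fin L → ℝ} (hΦ : ∀ l k, 0 ≤ Φ l k) (PT : ℝ) :
    bmacRegion m n H Φ PT ⊆ bmacRegion n m (fun l k => (H k l)ᴴ) (fun l k => Φ k l) PT := by
  rintro r ⟨hr, S, hS, hpow, hrate⟩
  obtain ⟨c, x, rfl⟩ := exists_eq_linkCov hS
  obtain ⟨y, hy_pow, hy_sinr⟩ := exists_mmseSinr_le_reverse (H := fun s s' => H s.1 s'.1) (x := x)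
    (sicCoupling_nonneg hΦ)
  refine ⟨hr, linkCov y, posSemidef_linkCov y, ?_, fun l => (hrate l).trans ?_⟩
  · rw [sum_re_trace_linkCov] at hpow ⊢
    exact hy_pow.trans hpow
  · rw [bmacRate_linkCov hΦ, bmacRate_linkCov_reverse hΦ]
    refine Finset.sum_le_sum fun i _ => Real.log_le_log ?_ (add_le_add_right (hy_sinr ⟨l, i⟩) 1)
    linarith [mmseSinr_nonneg (fun s s' => H s.1 s'.1) x ⟨l, i⟩ (sicCoupling_nonneg hΦ)]

theorem stmt1_general {L : ℕ} (m n : Fin L → ℕ)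
    (H : ∀ l k : Fin L, Matrix (Fin (n l)) (Fin (m k)) ℂ)
    (Φ : Fin L → Fin L → ℝ) (hΦ : ∀ l k, 0 ≤ Φ l k) (PT : ℝ) :
    bmacRegion m n H Φ PT
      = bmacRegion n m (fun l k => (H k l)ᴴ) (fun l k => Φ k l) PT := by
  refine (bmacRegion_subset_reverse m n H hΦ PT).antisymm ?_
  simpa only [conjTranspose_conjTranspose] using
    bmacRegion_subset_reverse n m (fun l k => (H k l)ᴴ) (fun l k => hΦ k l) PT

/-- Rate duality: the forward and reverse achievable rate regions of a B-MAC
network coincide. -/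
theorem stmt1 {L : ℕ} (hL : 1 ≤ L) (m n : Fin L → ℕ)
    (H : ∀ l k : Fin L, Matrix (Fin (n l)) (Fin (m k)) ℂ)
    (Φ : Fin L → Fin L → ℝ)
    (hΦ : ∀ l k, Φ l k = 0 ∨ Φ l k = 1) (hΦd : ∀ l, Φ l l = 0)
    (PT : ℝ) (hPT : 0 < PT) :
    bmacRegion m n H Φ PT
      = bmacRegion n m (fun l k => (H k l)ᴴ) (fun l k => Φ k l) PT :=
  stmt1_general m n H Φ (fun l k => by rcases hΦ l k with h | h <;> simp [h]) PT
end
end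

section
/- Let K ≥ 1, let g ∈ ℝ^K have positive entries, let Ψ ∈ ℝ^{K×K} have nonnegative entries and zero diagonal, and let p ∈ ℝ^K have positive entries. Define the forward SINRs γ_i = p_i g_i / (1 + (Ψp)_i) and the diagonal matrix D with diagonal entries γ_i / g_i. Then D^{-1} − Ψ^T is invertible, the vector q = (D^{-1} − Ψ^T)^{-1} 𝟙 (where 𝟙 is the all-ones vector) has positive entries, Σ_{i=1}^{K} q_i = Σ_{i=1}^{K} p_i, and the reverse SINRs satisfy q_i g_i / (1 + (Ψ^T q)_i) = γ_i for every i; i.e., a set of SINRs achievable in the forward links with sum power P_T is achievable in the reverse links with the same sum power. -/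
open Matrix

noncomputable section

/-!
At nonzero target SINRs the forward SINR equations are the linear system `A *ᵥ p = 1` with
`A = D⁻¹ - Ψ`, and the reverse ones are `Aᵀ *ᵥ q = 1`. So the two sum powers agree:
`∑ i, q i = q ⬝ᵥ A *ᵥ p = p ⬝ᵥ Aᵀ *ᵥ q = ∑ i, p i`. The reverse system has a unique solution, and a
positive one, because the off-diagonal entries of `Aᵀ` are nonpositive and `p ᵥ* Aᵀ = 1` with `p`
nonnegative: this makes `Aᵀ` a nonsingular M-matrix, hence inverse-monotone.
-/

section ZMatrix

variable {ι R : Type*}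

/-- A Z-matrix: a square matrix whose off-diagonal entries are all nonpositive. The matrices
`D⁻¹ - Ψ` of the SINR equations are of this kind. -/
def IsZMatrix [Zero R] [LE R] (M : Matrix ι ι R) : Prop :=
  Pairwise fun i j => M i j ≤ 0

lemma isZMatrix_diagonal_sub [DecidableEq ι] [AddCommGroup R] [PartialOrder R]
    [IsOrderedAddMonoid R] (d : ι → R) {Ψ : Matrix ι ι R} (hΨ : ∀ i k, 0 ≤ Ψ i k) :
    IsZMatrix (diagonal d - Ψ) :=
  fun i k hik => by simp [diagonal_apply_ne d hik, hΨ i k]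

namespace IsZMatrix

lemma transpose [Zero R] [LE R] {M : Matrix ι ι R} (hM : IsZMatrix M) : IsZMatrix Mᵀ :=
  fun _ _ hij => hM hij.symm

variable [Fintype ι]

lemma mulVec_apply_nonpos_of_apply_eq_zero [Semiring R] [PartialOrder R] [IsOrderedRing R]
    {M : Matrix ι ι R} (hM : IsZMatrix M) {v : ι → R} (hv : 0 ≤ v) {i : ι} (hi : v i = 0) :
    (M *ᵥ v) i ≤ 0 := by
  refine Finset.sum_nonpos fun j _ => ?_
  obtain rfl | hij := eq_or_ne i j
  · rw [hi, mul_zero]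
  · exact mul_nonpos_of_nonpos_of_nonneg (hM hij) (hv j)

lemma mulVec_negPart_nonpos [Ring R] [LinearOrder R] [IsOrderedRing R] {M : Matrix ι ι R}
    (hM : IsZMatrix M) {v : ι → R} (hv : 0 ≤ M *ᵥ v) : M *ᵥ v⁻ ≤ 0 := by
  intro i
  obtain hi | hi := le_total 0 (v i)
  · exact hM.mulVec_apply_nonpos_of_apply_eq_zero (negPart_nonneg v) (negPart_of_nonneg hi)
  · have hpos : (M *ᵥ v⁺) i ≤ 0 :=
      hM.mulVec_apply_nonpos_of_apply_eq_zero (posPart_nonneg v) (posPart_of_nonpos hi)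
    have hle : M *ᵥ v⁻ ≤ M *ᵥ v⁺ := by
      rwa [← sub_nonneg, ← mulVec_sub, posPart_sub_negPart]
    exact (hle i).trans hpos

section StrictOrderedRing

variable [Ring R] [LinearOrder R] [IsStrictOrderedRing R] {M : Matrix ι ι R} {p : ι → R}

lemma nonneg_of_mulVec_nonneg (hM : IsZMatrix M) (hp : 0 ≤ p) (hpM : ∀ i, 0 < (p ᵥ* M) i)
    {v : ι → R} (hv : 0 ≤ M *ᵥ v) : 0 ≤ v := by
  have hterm : ∀ i ∈ Finset.univ, 0 ≤ (p ᵥ* M) i * v⁻ i := fun i _ =>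
    mul_nonneg (hpM i).le (negPart_nonneg v i)
  have hsum_le : ∑ i, (p ᵥ* M) i * v⁻ i ≤ 0 :=
    calc p ᵥ* M ⬝ᵥ v⁻ = p ⬝ᵥ M *ᵥ v⁻ := (dotProduct_mulVec p M v⁻).symm
      _ ≤ p ⬝ᵥ 0 := dotProduct_le_dotProduct_of_nonneg_left (hM.mulVec_negPart_nonpos hv) hp
      _ = 0 := dotProduct_zero p
  have hsum : ∑ i, (p ᵥ* M) i * v⁻ i = 0 := hsum_le.antisymm (Finset.sum_nonneg hterm)
  refine negPart_eq_zero.mp (funext fun i => ?_)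
  have hi := (Finset.sum_eq_zero_iff_of_nonneg hterm).mp hsum i (Finset.mem_univ i)
  exact (mul_eq_zero.mp hi).resolve_left (hpM i).ne'

lemma pos_of_mulVec_pos (hM : IsZMatrix M) (hp : 0 ≤ p) (hpM : ∀ i, 0 < (p ᵥ* M) i)
    {v : ι → R} (hv : ∀ i, 0 < (M *ᵥ v) i) (i : ι) : 0 < v i := by
  have hv0 : 0 ≤ v := hM.nonneg_of_mulVec_nonneg hp hpM fun j => (hv j).le
  refine (hv0 i).lt_of_ne' fun hi => ?_
  exact (hv i).not_ge (hM.mulVec_apply_nonpos_of_apply_eq_zero hv0 hi)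

lemma mulVec_injective (hM : IsZMatrix M) (hp : 0 ≤ p) (hpM : ∀ i, 0 < (p ᵥ* M) i) :
    Function.Injective M.mulVec := by
  have hle : ∀ u v, M *ᵥ u = M *ᵥ v → v ≤ u := fun u v huv =>
    sub_nonneg.mp <| hM.nonneg_of_mulVec_nonneg hp hpM <| by rw [mulVec_sub, huv, sub_self]
  exact fun u v huv => (hle v u huv.symm).antisymm (hle u v huv)

end StrictOrderedRing

end IsZMatrix

end ZMatrix

section SINR

variable {ι R 𝕜 : Type*} [Fintype ι]

lemma inv_diagonal_of_forall_ne_zero [DecidableEq ι] [Field 𝕜] {d : ι → 𝕜} (hd : ∀ i, d i ≠ 0) :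
    (diagonal d)⁻¹ = diagonal d⁻¹ :=
  inv_eq_right_inv <| by simp [diagonal_mul_diagonal, mul_inv_cancel₀ (hd _)]

lemma sum_eq_sum_of_mulVec_eq_one [CommSemiring R] {A : Matrix ι ι R} {p q : ι → R}
    (hp : A *ᵥ p = 1) (hq : Aᵀ *ᵥ q = 1) : ∑ i, q i = ∑ i, p i :=
  calc ∑ i, q i = q ⬝ᵥ A *ᵥ p := by rw [hp, dotProduct_one]
    _ = p ⬝ᵥ Aᵀ *ᵥ q := (dotProduct_transpose_mulVec A p q).symm
    _ = ∑ i, p i := by rw [hq, dotProduct_one]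

lemma one_add_mulVec_pos [Semiring R] [PartialOrder R] [IsStrictOrderedRing R]
    {Ψ : Matrix ι ι R} {p : ι → R} (hΨ : ∀ i k, 0 ≤ Ψ i k) (hp : 0 ≤ p) (i : ι) :
    0 < 1 + (Ψ *ᵥ p) i :=
  add_pos_of_pos_of_nonneg one_pos (dotProduct_nonneg_of_nonneg (hΨ i) hp)

/-- The SINR of stream `i` at unit noise power, for direct gains `g`, cross-talk matrix `Ψ` and
transmit powers `p`. The reverse links have the same direct gains and cross-talk matrix `Ψᵀ`. -/
def sinr [Field 𝕜] (g : ι → 𝕜) (Ψ : Matrix ι ι 𝕜) (p : ι → 𝕜) (i : ι) : 𝕜 :=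
  p i * g i / (1 + (Ψ *ᵥ p) i)

lemma sinr_eq_iff_mulVec_eq_one [DecidableEq ι] [Field 𝕜] {g γ p : ι → 𝕜} {Ψ : Matrix ι ι 𝕜}
    {i : ι} (hγ : γ i ≠ 0) (hden : 1 + (Ψ *ᵥ p) i ≠ 0) :
    sinr g Ψ p i = γ i ↔ ((diagonal (g / γ) - Ψ) *ᵥ p) i = 1 := by
  rw [sinr, div_eq_iff hden, sub_mulVec, Pi.sub_apply, mulVec_diagonal, sub_eq_iff_eq_add,
    Pi.div_apply, div_mul_eq_mul_div, div_eq_iff hγ, mul_comm (p i), mul_comm (γ i)]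

theorem stmt14_general [DecidableEq ι] [Field 𝕜] [LinearOrder 𝕜] [IsStrictOrderedRing 𝕜]
    (g p : ι → 𝕜) (hg : ∀ i, g i ≠ 0) (hp : ∀ i, 0 < p i)
    (Ψ : Matrix ι ι 𝕜) (hΨ : ∀ i k, 0 ≤ Ψ i k)
    (γ : ι → 𝕜) (hγ : ∀ i, γ i = sinr g Ψ p i) :
    IsUnit ((diagonal fun i => γ i / g i)⁻¹ - Ψᵀ) ∧
    ∀ q : ι → 𝕜,
      q = ((diagonal fun i => γ i / g i)⁻¹ - Ψᵀ)⁻¹ *ᵥ (fun _ => 1) →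
      (∀ i, 0 < q i) ∧ (∑ i, q i) = (∑ i, p i) ∧ ∀ i, sinr g Ψᵀ q i = γ i := by
  have hp0 : 0 ≤ p := fun i => (hp i).le
  have hden := one_add_mulVec_pos hΨ hp0
  have hγ0 : ∀ i, γ i ≠ 0 := fun i =>
    hγ i ▸ div_ne_zero (mul_ne_zero (hp i).ne' (hg i)) (hden i).ne'
  have hD : (diagonal fun i => γ i / g i)⁻¹ = diagonal (g / γ) :=
    (inv_diagonal_of_forall_ne_zero fun i => div_ne_zero (hγ0 i) (hg i)).trans
      (congrArg diagonal (inv_div γ g))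
  set A := diagonal (g / γ) - Ψ
  have hAt : diagonal (g / γ) - Ψᵀ = Aᵀ := by rw [transpose_sub, diagonal_transpose]
  have hAp : A *ᵥ p = 1 :=
    funext fun i => (sinr_eq_iff_mulVec_eq_one (hγ0 i) (hden i).ne').mp (hγ i).symm
  have hZ : IsZMatrix Aᵀ := (isZMatrix_diagonal_sub _ hΨ).transpose
  have hpA : ∀ i, 0 < (p ᵥ* Aᵀ) i := by simp [vecMul_transpose, hAp]
  have hunit : IsUnit Aᵀ := mulVec_injective_iff_isUnit.mp (hZ.mulVec_injective hp0 hpA)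
  rw [hD, hAt]
  refine ⟨hunit, fun q hq => ?_⟩
  have hAq : Aᵀ *ᵥ q = 1 := by
    rw [hq, mulVec_mulVec, mul_nonsing_inv _ ((isUnit_iff_isUnit_det _).mp hunit), one_mulVec,
      Pi.one_def]
  have hqpos : ∀ i, 0 < q i := hZ.pos_of_mulVec_pos hp0 hpA (by simp [hAq])
  have hden' := one_add_mulVec_pos (Ψ := Ψᵀ) (fun i k => hΨ k i) fun i => (hqpos i).le
  refine ⟨hqpos, sum_eq_sum_of_mulVec_eq_one hAp hAq, fun i => ?_⟩
  rw [sinr_eq_iff_mulVec_eq_one (hγ0 i) (hden' i).ne', hAt, hAq, Pi.one_apply]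

end SINR

/-- SINR duality for scalar streams: SINRs achievable in the forward links
with sum power `P_T` are achievable in the reverse links with the same sum
power, with reverse powers `q = (D⁻¹ − Ψᵀ)⁻¹ 𝟙`. -/
theorem stmt14 {K : ℕ} (hK : 1 ≤ K)
    (g p : Fin K → ℝ) (hg : ∀ i, 0 < g i) (hp : ∀ i, 0 < p i)
    (Ψ : Matrix (Fin K) (Fin K) ℝ)
    (hΨ : ∀ i k, 0 ≤ Ψ i k) (hΨd : ∀ i, Ψ i i = 0)
    (γ : Fin K → ℝ) (hγ : ∀ i, γ i = p i * g i / (1 + (Ψ *ᵥ p) i)) :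
    IsUnit ((Matrix.diagonal fun i => γ i / g i)⁻¹ - Ψᵀ) ∧
    ∀ q : Fin K → ℝ,
      q = ((Matrix.diagonal fun i => γ i / g i)⁻¹ - Ψᵀ)⁻¹ *ᵥ (fun _ => 1) →
      (∀ i, 0 < q i) ∧ (∑ i, q i) = (∑ i, p i) ∧
      ∀ i, q i * g i / (1 + (Ψᵀ *ᵥ q) i) = γ i :=
  stmt14_general g p (fun i => (hg i).ne') hp Ψ hΨ γ hγ
end
end

section
/- Let H̄ ∈ ℂ^{n×m} have a thin singular value decomposition H̄ = F Δ G^† with F ∈ ℂ^{n×N}, G ∈ ℂ^{m×N}, F^†F = I_N = G^†G, and Δ ∈ ℝ^{N×N} diagonal with positive diagonal entries δ_1,…,δ_N. For ν ≥ 0 let D = (νI_N − Δ^{-2})^+ be the diagonal matrix with entries max(ν − δ_i^{-2}, 0) and let Q = G D G^† (the water-filling input with level ν). Then there exists a Hermitian positive semidefinite Θ ∈ ℂ^{m×m} with Tr(QΘ) = 0 such that ν H̄^† (I_n + H̄ Q H̄^†)^{-1} H̄ + Θ = I_m; i.e., the water-filling covariance satisfies the single-user KKT stationarity condition. -/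
open Matrix ComplexOrder

noncomputable section

/-!
Only the Gram matrix `H̄ᴴ H̄ = G diag(s) Gᴴ`, `s = δ²`, matters. By the push-through identity
`(1 + U V)⁻¹ U = U (1 + V U)⁻¹`, used once to turn `H̄ᴴ (1 + H̄ Q H̄ᴴ)⁻¹ H̄` into
`H̄ᴴ H̄ (1 + Q H̄ᴴ H̄)⁻¹` and once more to pull `Gᴴ` through the inverse, the gradient is
`G diag(s / (1 + d s)) Gᴴ`. On each mode `1 + d s = max (ν s) 1`, and since
`min (ν s) 1 * max (ν s) 1 = ν s`, scaling by `ν` gives `min (ν s) 1 = 1 - (1 - ν s)⁺`. Hence the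
multiplier is `(1 - ν s)⁺` on the modes and the identity on the orthogonal complement of the range
of `G`; the power `(ν - s⁻¹)⁺` vanishes wherever `(1 - ν s)⁺` does not.
-/

section PushThrough

variable {R m n k : Type*} [CommRing R] [Fintype m] [Fintype n] [DecidableEq n] [Fintype k]
  [DecidableEq k]

theorem inv_one_add_mul_mul_comm [DecidableEq m] (U : Matrix m n R) (V : Matrix n m R) :
    (1 + U * V)⁻¹ * U = U * (1 + V * U)⁻¹ := by
  by_cases hUV : IsUnit (1 + U * V).det
  · have hVU : IsUnit (1 + V * U).det := by rwa [← det_one_add_mul_comm]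
    have hpush : (1 + U * V) * U = U * (1 + V * U) := by
      simp only [Matrix.add_mul, Matrix.mul_add, Matrix.one_mul, Matrix.mul_one, Matrix.mul_assoc]
    calc (1 + U * V)⁻¹ * U
        = (1 + U * V)⁻¹ * (U * (1 + V * U)) * (1 + V * U)⁻¹ := by
          rw [← Matrix.mul_assoc, mul_nonsing_inv_cancel_right _ _ hVU]
      _ = U * (1 + V * U)⁻¹ := by rw [← hpush, nonsing_inv_mul_cancel_left _ _ hUV]
  · -- The two determinants agree, so here both inverses take the junk value `0`.
    have hVU : ¬IsUnit (1 + V * U).det := by rwa [← det_one_add_mul_comm]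
    rw [nonsing_inv_apply_not_isUnit _ hUV, nonsing_inv_apply_not_isUnit _ hVU, Matrix.zero_mul,
      Matrix.mul_zero]

theorem mul_inv_one_add_mul_mul_eq_of_gram {H : Matrix n m R} {K : Matrix m n R}
    {G : Matrix m k R} {L : Matrix k m R} {S : Matrix k k R} (hLG : L * G = 1)
    (hKH : K * H = G * S * L) (D : Matrix k k R) :
    K * (1 + H * (G * D * L) * K)⁻¹ * H = G * (S * (1 + D * S)⁻¹) * L := by
  classical
  have hgram : G * D * L * K * H = G * (D * S) * L := by
    simp only [Matrix.mul_assoc, hKH]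
    simp only [← Matrix.mul_assoc L, hLG, Matrix.one_mul]
  have hpull : L * (1 + G * (D * S) * L)⁻¹ = (1 + D * S)⁻¹ * L := by
    have h := inv_one_add_mul_mul_comm L (G * (D * S))
    rwa [← Matrix.mul_assoc, hLG, Matrix.one_mul, eq_comm] at h
  calc K * (1 + H * (G * D * L) * K)⁻¹ * H
      = K * ((1 + H * (G * D * L * K))⁻¹ * H) := by simp only [Matrix.mul_assoc]
    _ = K * H * (1 + G * (D * S) * L)⁻¹ := by
      rw [inv_one_add_mul_mul_comm, hgram, ← Matrix.mul_assoc]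
    _ = G * S * (L * (1 + G * (D * S) * L)⁻¹) := by rw [hKH, Matrix.mul_assoc]
    _ = G * (S * (1 + D * S)⁻¹) * L := by rw [hpull]; simp only [Matrix.mul_assoc]

end PushThrough

section Isometry

variable {m n k : Type*} [Fintype n] [Fintype k] [DecidableEq k]

theorem conjTranspose_mul_self_of_svd {𝕜 : Type*} [RCLike 𝕜] {F : Matrix n k 𝕜}
    (hF : Fᴴ * F = 1) (δ : k → ℝ) (G : Matrix m k 𝕜) :
    (F * diagonal (fun i => (δ i : 𝕜)) * Gᴴ)ᴴ * (F * diagonal (fun i => (δ i : 𝕜)) * Gᴴ) =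
      G * diagonal (fun i => ((δ i ^ 2 : ℝ) : 𝕜)) * Gᴴ := by
  have hsq : (diagonal fun i => (δ i : 𝕜))ᴴ * diagonal (fun i => (δ i : 𝕜)) =
      diagonal fun i => ((δ i ^ 2 : ℝ) : 𝕜) := by
    rw [diagonal_conjTranspose, diagonal_mul_diagonal]
    refine congrArg diagonal (funext fun i => ?_)
    rw [Pi.star_apply, RCLike.star_def, RCLike.conj_ofReal, ← RCLike.ofReal_mul, ← pow_two]
  simp only [← hsq, conjTranspose_mul, conjTranspose_conjTranspose, Matrix.mul_assoc]
  rw [← Matrix.mul_assoc Fᴴ, hF, Matrix.one_mul]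

theorem isStarProjection_mul_conjTranspose {R : Type*} [Semiring R] [StarRing R] [Fintype m]
    {G : Matrix m k R} (hG : Gᴴ * G = 1) : IsStarProjection (G * Gᴴ) where
  isIdempotentElem := by
    rw [IsIdempotentElem, Matrix.mul_assoc, ← Matrix.mul_assoc Gᴴ, hG, Matrix.one_mul]
  isSelfAdjoint := isHermitian_mul_conjTranspose_self G

end Isometry

section ScalarWaterFilling

/-- The water-filling power `(ν - s⁻¹)⁺` that level `ν` allocates to a mode of gain `s = δ²`. -/
def waterFillingPower (ν s : ℝ) : ℝ := max (ν - s⁻¹) 0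

/-- The dual slack `(1 - ν s)⁺` of a mode of gain `s` at water level `ν`: the multiplier of the
constraint that the power of this mode be nonnegative. -/
def waterFillingSlack (ν s : ℝ) : ℝ := max (1 - ν * s) 0

variable {s : ℝ}

theorem waterFillingSlack_nonneg (ν s : ℝ) : 0 ≤ waterFillingSlack ν s := le_max_right _ _

theorem one_sub_waterFillingSlack_eq_min (ν s : ℝ) : 1 - waterFillingSlack ν s = min (ν * s) 1 := by
  rw [waterFillingSlack, ← min_sub_sub_left, sub_sub_cancel, sub_zero]

theorem one_add_waterFillingPower_mul_eq_max (ν : ℝ) (hs : 0 < s) :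
    1 + waterFillingPower ν s * s = max (ν * s) 1 := by
  rw [waterFillingPower, max_mul_of_nonneg _ _ hs.le, sub_mul, inv_mul_cancel₀ hs.ne', zero_mul,
    ← max_add_add_left, add_sub_cancel, add_zero]

theorem one_add_waterFillingPower_mul_ne_zero (ν : ℝ) (hs : 0 < s) :
    1 + waterFillingPower ν s * s ≠ 0 := by
  rw [one_add_waterFillingPower_mul_eq_max ν hs]
  exact (zero_lt_one.trans_le (le_max_right _ _)).ne'

theorem one_sub_waterFillingSlack_eq_mul_inv (ν : ℝ) (hs : 0 < s) :
    1 - waterFillingSlack ν s = ν * (s * (1 + waterFillingPower ν s * s)⁻¹) := by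
  rw [← mul_assoc, eq_mul_inv_iff_mul_eq₀ (one_add_waterFillingPower_mul_ne_zero ν hs),
    one_sub_waterFillingSlack_eq_min, one_add_waterFillingPower_mul_eq_max ν hs, min_mul_max,
    mul_one]

theorem waterFillingPower_mul_waterFillingSlack (ν : ℝ) (hs : 0 < s) :
    waterFillingPower ν s * waterFillingSlack ν s = 0 := by
  rcases le_total (ν * s) 1 with h | h
  · have hν : ν ≤ s⁻¹ := by rwa [← one_div, le_div_iff₀ hs]
    rw [waterFillingPower, max_eq_right (sub_nonpos.2 hν), zero_mul]
  · rw [waterFillingSlack, max_eq_right (sub_nonpos.2 h), mul_zero]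

end ScalarWaterFilling

section MatrixWaterFilling

variable {𝕜 m n k : Type*} [RCLike 𝕜] [Fintype m] [DecidableEq m] [Fintype n] [DecidableEq n]
  [Fintype k] [DecidableEq k] {H : Matrix n m 𝕜} {G : Matrix m k 𝕜} {s : k → ℝ}

/-- The water-filling covariance `Q = G D Gᴴ` with level `ν`, for a channel whose Gram matrix
`HᴴH = G diag(s) Gᴴ` has eigenmodes the columns of `G` and gains `s`. -/
def waterFillingCovariance (G : Matrix m k 𝕜) (s : k → ℝ) (ν : ℝ) : Matrix m m 𝕜 :=
  G * diagonal (fun i => (waterFillingPower ν (s i) : 𝕜)) * Gᴴ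

/-- The multiplier `Θ` of the constraint `Q ⪰ 0` in the KKT conditions: the slack of each
eigenmode, and the identity on the orthogonal complement of the range of `G`. -/
def waterFillingMultiplier (G : Matrix m k 𝕜) (s : k → ℝ) (ν : ℝ) : Matrix m m 𝕜 :=
  1 - G * Gᴴ + G * diagonal (fun i => (waterFillingSlack ν (s i) : 𝕜)) * Gᴴ

open scoped MatrixOrder in
theorem posSemidef_waterFillingMultiplier (hG : Gᴴ * G = 1) (s : k → ℝ) (ν : ℝ) :
    (waterFillingMultiplier G s ν).PosSemidef := by
  have hcompl : (1 - G * Gᴴ).PosSemidef :=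
    nonneg_iff_posSemidef.1 (isStarProjection_mul_conjTranspose hG).one_sub_nonneg
  have hslack : (diagonal fun i => (waterFillingSlack ν (s i) : 𝕜)).PosSemidef :=
    posSemidef_diagonal_iff.2 fun i => RCLike.ofReal_nonneg.2 (waterFillingSlack_nonneg ν (s i))
  exact hcompl.add (hslack.mul_mul_conjTranspose_same G)

theorem waterFillingCovariance_mul_waterFillingMultiplier (hG : Gᴴ * G = 1) (hs : ∀ i, 0 < s i)
    (ν : ℝ) : waterFillingCovariance G s ν * waterFillingMultiplier G s ν = 0 := by
  have hmodes : diagonal (fun i => (waterFillingPower ν (s i) : 𝕜)) *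
      diagonal (fun i => (waterFillingSlack ν (s i) : 𝕜)) = 0 := by
    rw [diagonal_mul_diagonal, diagonal_eq_zero]
    refine funext fun i => ?_
    rw [Pi.zero_apply]
    exact_mod_cast waterFillingPower_mul_waterFillingSlack ν (hs i)
  have hcompl : Gᴴ * (1 - G * Gᴴ) = 0 := by
    rw [Matrix.mul_sub, ← Matrix.mul_assoc, hG, Matrix.mul_one, Matrix.one_mul, sub_self]
  have hrange (C : Matrix k k 𝕜) : Gᴴ * (G * C * Gᴴ) = C * Gᴴ := by
    rw [← Matrix.mul_assoc, ← Matrix.mul_assoc, hG, Matrix.one_mul]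
  rw [waterFillingCovariance, waterFillingMultiplier, Matrix.mul_assoc, Matrix.mul_add, hcompl,
    hrange, zero_add, Matrix.mul_assoc, ← Matrix.mul_assoc (diagonal _), hmodes, Matrix.zero_mul,
    Matrix.mul_zero]

theorem smul_diagonal_mul_inv_one_add_waterFillingPower (hs : ∀ i, 0 < s i) (ν : ℝ) :
    ν • (diagonal (fun i => (s i : 𝕜)) * (1 + diagonal (fun i => (waterFillingPower ν (s i) : 𝕜)) *
      diagonal (fun i => (s i : 𝕜)))⁻¹) =
    1 - diagonal (fun i => (waterFillingSlack ν (s i) : 𝕜)) := by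
  have hinv : (1 + diagonal (fun i => (waterFillingPower ν (s i) : 𝕜)) *
      diagonal (fun i => (s i : 𝕜)))⁻¹ =
      diagonal fun i => (((1 + waterFillingPower ν (s i) * s i)⁻¹ : ℝ) : 𝕜) := by
    refine inv_eq_right_inv ?_
    rw [diagonal_mul_diagonal, ← diagonal_one, diagonal_add, diagonal_mul_diagonal]
    refine congrArg diagonal (funext fun i => ?_)
    exact_mod_cast mul_inv_cancel₀ (one_add_waterFillingPower_mul_ne_zero ν (hs i))
  rw [hinv, diagonal_mul_diagonal, ← diagonal_smul, ← diagonal_one, diagonal_sub]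
  refine congrArg diagonal (funext fun i => ?_)
  rw [Pi.smul_apply, RCLike.real_smul_eq_coe_mul]
  exact_mod_cast (one_sub_waterFillingSlack_eq_mul_inv ν (hs i)).symm

theorem waterFillingCovariance_stationarity (hG : Gᴴ * G = 1) (hs : ∀ i, 0 < s i)
    (hH : Hᴴ * H = G * diagonal (fun i => (s i : 𝕜)) * Gᴴ) (ν : ℝ) :
    ν • (Hᴴ * (1 + H * waterFillingCovariance G s ν * Hᴴ)⁻¹ * H) +
      waterFillingMultiplier G s ν = 1 := by
  rw [waterFillingCovariance, mul_inv_one_add_mul_mul_eq_of_gram hG hH, ← Matrix.smul_mul,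
    ← Matrix.mul_smul, smul_diagonal_mul_inv_one_add_waterFillingPower hs, waterFillingMultiplier,
    Matrix.mul_sub, Matrix.sub_mul, Matrix.mul_one]
  abel

theorem stmt16_general (hG : Gᴴ * G = 1) (hs : ∀ i, 0 < s i)
    (hH : Hᴴ * H = G * diagonal (fun i => (s i : 𝕜)) * Gᴴ) (ν : ℝ) :
    ∃ Θ : Matrix m m 𝕜, Θ.PosSemidef ∧ trace (waterFillingCovariance G s ν * Θ) = 0 ∧
      ν • (Hᴴ * (1 + H * waterFillingCovariance G s ν * Hᴴ)⁻¹ * H) + Θ = 1 :=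
  ⟨waterFillingMultiplier G s ν, posSemidef_waterFillingMultiplier hG s ν,
    by rw [waterFillingCovariance_mul_waterFillingMultiplier hG hs, trace_zero],
    waterFillingCovariance_stationarity hG hs hH ν⟩

end MatrixWaterFilling

/-- The single-user water-filling covariance `Q = G D Gᴴ` with level `ν`
satisfies the KKT stationarity condition
`ν H̄ᴴ(I + H̄QH̄ᴴ)⁻¹H̄ + Θ = I` with `Θ ⪰ 0` and `Tr(QΘ) = 0`. -/
theorem stmt16 {n' m' N : ℕ}
    (Hbar : Matrix (Fin n') (Fin m') ℂ)
    (F : Matrix (Fin n') (Fin N) ℂ) (G : Matrix (Fin m') (Fin N) ℂ)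
    (δ : Fin N → ℝ) (hδ : ∀ i, 0 < δ i)
    (hF : Fᴴ * F = 1) (hG : Gᴴ * G = 1)
    (hSVD : Hbar = F * Matrix.diagonal (fun i => (δ i : ℂ)) * Gᴴ)
    (ν : ℝ) (hν : 0 ≤ ν)
    (Q : Matrix (Fin m') (Fin m') ℂ)
    (hQ : Q = G * Matrix.diagonal
        (fun i => ((max (ν - ((δ i) ^ 2)⁻¹) 0 : ℝ) : ℂ)) * Gᴴ) :
    ∃ Θ : Matrix (Fin m') (Fin m') ℂ, Θ.PosSemidef ∧
      Matrix.trace (Q * Θ) = 0 ∧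
      ν • (Hbarᴴ * (1 + Hbar * Q * Hbarᴴ)⁻¹ * Hbar) + Θ = 1 := by
  subst hQ hSVD
  exact stmt16_general hG (fun i => pow_pos (hδ i) 2) (conjTranspose_mul_self_of_svd hF δ G) ν
end
end

section
/- For any Hermitian positive semidefinite Σ_{1:L}, any l ∈ {1,…,L}, and any reals 0 ≤ β_1 ≤ β_2, the rate under uniformly scaled inputs is monotone: ℐ_l(β_1Σ_{1:L}, Φ) ≤ ℐ_l(β_2Σ_{1:L}, Φ), where β·Σ_{1:L} denotes (βΣ_1,…,βΣ_L); moreover the inequality is strict if β_1 < β_2 and H_{l,l} Σ_l H_{l,l}^† ≠ 0. -/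
open Matrix ComplexOrder

noncomputable section

/-!
At a positive scale `t`, multiplying signal and interference by `t` has the same effect on the rate
as dividing the noise covariance by `t`. With signal `Rᴴ * R` in total noise `P` the rate is
`log det (1 + R * P⁻¹ * Rᴴ)`, which strictly decreases when `P` grows by a positive definite matrix.
-/

section

variable {ι κ 𝕜 : Type*} [Fintype ι] [RCLike 𝕜]

open scoped MatrixOrder in
theorem exists_eq_conjTranspose_mul_self_of_posSemidef {E : Matrix ι ι 𝕜} (hE : E.PosSemidef) :
    ∃ R : Matrix ι ι 𝕜, E = Rᴴ * R := by
  classical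
  exact CStarAlgebra.nonneg_iff_eq_star_mul_self.mp hE.nonneg

theorem mul_mul_conjTranspose_ne_zero_of_posDef {K : Matrix ι ι 𝕜} (hK : K.PosDef)
    {R : Matrix κ ι 𝕜} (hR : R ≠ 0) : R * K * Rᴴ ≠ 0 := by
  classical
  obtain ⟨C, rfl⟩ := exists_eq_conjTranspose_mul_self_of_posSemidef hK.posSemidef
  have hC : IsUnit C.det := (isUnit_iff_isUnit_det C).mp (isUnit_of_mul_isUnit_right hK.isUnit)
  contrapose! hR
  have hCR : (C * Rᴴ)ᴴ * (C * Rᴴ) = 0 := by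
    rwa [conjTranspose_mul, conjTranspose_conjTranspose, Matrix.mul_assoc, ← Matrix.mul_assoc Cᴴ,
      ← Matrix.mul_assoc]
  rw [← conjTranspose_eq_zero, ← nonsing_inv_mul_cancel_left C Rᴴ hC,
    conjTranspose_mul_self_eq_zero.mp hCR, Matrix.mul_zero]

variable [DecidableEq ι]

theorem det_one_add_eq_prod_one_add_eigenvalues {G : Matrix ι ι 𝕜} (hG : G.IsHermitian) :
    (1 + G).det = ∏ i, (1 + (hG.eigenvalues i : 𝕜)) := by
  have h : (scalar ι (-1) - G).det = ∏ i, (-1 - (hG.eigenvalues i : 𝕜)) := by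
    rw [← eval_charpoly, hG.charpoly_eq, Polynomial.eval_prod]
    simp only [Polynomial.eval_sub, Polynomial.eval_X, Polynomial.eval_C]
  simp only [map_neg, map_one, ← neg_add', det_neg, Finset.prod_neg, Finset.card_univ] at h
  exact mul_left_cancel₀ (pow_ne_zero _ (neg_ne_zero.mpr one_ne_zero)) h

theorem one_lt_det_one_add_of_posSemidef {G : Matrix ι ι 𝕜} (hG : G.PosSemidef) (hG0 : G ≠ 0) :
    1 < (1 + G).det := by
  obtain ⟨i, hi⟩ := Function.ne_iff.mp (mt hG.1.eigenvalues_eq_zero_iff.mp hG0)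
  have hlt : ∏ _j : ι, (1 : ℝ) < ∏ j, (1 + hG.1.eigenvalues j) :=
    Finset.prod_lt_prod (fun _ _ => one_pos)
      (fun j _ => le_add_of_nonneg_right (hG.eigenvalues_nonneg j))
      ⟨i, Finset.mem_univ i, lt_add_of_pos_right 1 ((hG.eigenvalues_nonneg i).lt_of_ne' hi)⟩
  rw [Finset.prod_const_one] at hlt
  rw [det_one_add_eq_prod_one_add_eigenvalues hG.1]
  exact_mod_cast hlt

theorem posDef_inv_sub_inv {P Q : Matrix ι ι 𝕜} (hP : P.PosDef) (hPQ : (Q - P).PosDef) :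
    (P⁻¹ - Q⁻¹).PosDef := by
  have hQ : Q.PosDef := add_sub_cancel P Q ▸ hP.add hPQ
  have hu : IsUnit (Q - P).det := hPQ.det_pos.ne'.isUnit
  have hsum : Q * (Q - P)⁻¹ * P = P + P * (Q - P)⁻¹ * P := by
    nth_rw 1 [← sub_add_cancel Q P]
    rw [add_mul, mul_nonsing_inv _ hu, add_mul, one_mul]
  have hinv : P⁻¹ - Q⁻¹ = (P + P * (Q - P)⁻¹ * P)⁻¹ := by
    rw [Matrix.inv_sub_inv (iff_of_true hP.isUnit hQ.isUnit), ← hsum, Matrix.mul_inv_rev,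
      Matrix.mul_inv_rev, nonsing_inv_nonsing_inv _ hu, ← mul_assoc]
  have hconj : (P * (Q - P)⁻¹ * P).PosSemidef := by
    simpa only [hP.isHermitian.eq] using hPQ.inv.posSemidef.mul_mul_conjTranspose_same P
  exact hinv ▸ (hP.add_posSemidef hconj).inv

theorem det_lt_det_add {P E : Matrix ι ι 𝕜} (hP : P.PosDef) (hE : E.PosSemidef) (hE0 : E ≠ 0) :
    P.det < (P + E).det := by
  obtain ⟨R, rfl⟩ := exists_eq_conjTranspose_mul_self_of_posSemidef hE
  have hR : R ≠ 0 := right_ne_zero_of_mul hE0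
  rw [det_add_mul Rᴴ R hP.det_pos.ne'.isUnit]
  exact lt_mul_of_one_lt_right hP.det_pos <|
    one_lt_det_one_add_of_posSemidef (hP.inv.posSemidef.mul_mul_conjTranspose_same R)
      (mul_mul_conjTranspose_ne_zero_of_posDef hP.inv hR)

theorem re_det_pos_of_posDef {P : Matrix ι ι 𝕜} (hP : P.PosDef) : 0 < RCLike.re P.det :=
  (RCLike.pos_iff.mp hP.det_pos).1

/-- The mutual information of a Gaussian vector channel with noise covariance `P` and received
signal covariance `E`. It is meaningful when `P` and `P + E` are positive definite; otherwise the
logarithms may take junk values. -/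
def logDetGain (P E : Matrix ι ι 𝕜) : ℝ :=
  Real.log (RCLike.re (P + E).det) - Real.log (RCLike.re P.det)

@[simp]
theorem logDetGain_zero_right (P : Matrix ι ι 𝕜) : logDetGain P 0 = 0 := by
  rw [logDetGain, add_zero, sub_self]

theorem logDetGain_lt_logDetGain_add {P E F : Matrix ι ι 𝕜} (hP : P.PosDef) (hE : E.PosSemidef)
    (hF : F.PosSemidef) (hF0 : F ≠ 0) : logDetGain P E < logDetGain P (E + F) := by
  have hPE := hP.add_posSemidef hE
  have hdet : RCLike.re (P + E).det < RCLike.re (P + E + F).det :=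
    (RCLike.lt_iff_re_im.mp (det_lt_det_add hPE hF hF0)).1
  rw [logDetGain, logDetGain, ← add_assoc]
  exact sub_lt_sub_right (Real.log_lt_log (re_det_pos_of_posDef hPE) hdet) _

theorem logDetGain_pos {P E : Matrix ι ι 𝕜} (hP : P.PosDef) (hE : E.PosSemidef) (hE0 : E ≠ 0) :
    0 < logDetGain P E := by
  simpa only [logDetGain_zero_right, zero_add] using
    logDetGain_lt_logDetGain_add hP PosSemidef.zero hE hE0

theorem logDetGain_conjTranspose_mul_self [Fintype κ] [DecidableEq κ] {P : Matrix ι ι 𝕜}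
    (hP : P.PosDef) (R : Matrix κ ι 𝕜) :
    logDetGain P (Rᴴ * R) = logDetGain 1 (R * P⁻¹ * Rᴴ) := by
  have hG : (1 + R * P⁻¹ * Rᴴ).PosDef :=
    PosDef.one.add_posSemidef (hP.inv.posSemidef.mul_mul_conjTranspose_same R)
  have hre : RCLike.re (P + Rᴴ * R).det =
      RCLike.re P.det * RCLike.re (1 + R * P⁻¹ * Rᴴ).det := by
    rw [det_add_mul Rᴴ R hP.det_pos.ne'.isUnit, RCLike.mul_re,
      (RCLike.pos_iff.mp hP.det_pos).2, zero_mul, sub_zero]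
  rw [logDetGain, logDetGain, hre,
    Real.log_mul (re_det_pos_of_posDef hP).ne' (re_det_pos_of_posDef hG).ne',
    add_sub_cancel_left, det_one, RCLike.one_re, Real.log_one, sub_zero]

theorem logDetGain_lt_logDetGain_of_posDef_sub {P Q E : Matrix ι ι 𝕜} (hP : P.PosDef)
    (hPQ : (Q - P).PosDef) (hE : E.PosSemidef) (hE0 : E ≠ 0) :
    logDetGain Q E < logDetGain P E := by
  have hQ : Q.PosDef := add_sub_cancel P Q ▸ hP.add hPQ
  have hD : (P⁻¹ - Q⁻¹).PosDef := posDef_inv_sub_inv hP hPQ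
  obtain ⟨R, rfl⟩ := exists_eq_conjTranspose_mul_self_of_posSemidef hE
  have hR : R ≠ 0 := right_ne_zero_of_mul hE0
  have hsplit : R * P⁻¹ * Rᴴ = R * Q⁻¹ * Rᴴ + R * (P⁻¹ - Q⁻¹) * Rᴴ := by
    rw [← add_mul, ← mul_add, add_sub_cancel]
  rw [logDetGain_conjTranspose_mul_self hP, logDetGain_conjTranspose_mul_self hQ, hsplit]
  exact logDetGain_lt_logDetGain_add PosDef.one
    (hQ.inv.posSemidef.mul_mul_conjTranspose_same R)
    (hD.posSemidef.mul_mul_conjTranspose_same R) (mul_mul_conjTranspose_ne_zero_of_posDef hD hR)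

theorem logDetGain_smul_smul {P E : Matrix ι ι 𝕜} (hP : P.PosDef) (hE : E.PosSemidef) {c : ℝ}
    (hc : c ≠ 0) : logDetGain (c • P) (c • E) = logDetGain P E := by
  have hlog {M : Matrix ι ι 𝕜} (hM : M.PosDef) :
      Real.log (RCLike.re (c • M).det) =
        Real.log (c ^ Fintype.card ι) + Real.log (RCLike.re M.det) := by
    rw [det_smul_of_tower, RCLike.smul_re,
      Real.log_mul (pow_ne_zero _ hc) (re_det_pos_of_posDef hM).ne']
  rw [logDetGain, logDetGain, ← smul_add, hlog (hP.add_posSemidef hE), hlog hP,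
    add_sub_add_left_eq_sub]

theorem strictMonoOn_logDetGain_add_smul {N A B : Matrix ι ι 𝕜} (hN : N.PosDef)
    (hA : A.PosSemidef) (hB : B.PosSemidef) (hB0 : B ≠ 0) :
    StrictMonoOn (fun t : ℝ => logDetGain (N + t • A) (t • B)) (Set.Ici 0) := by
  intro s hs t ht hst
  have hrescale {r : ℝ} (hr : 0 < r) :
      logDetGain (N + r • A) (r • B) = logDetGain (r⁻¹ • N + A) B := by
    rw [← logDetGain_smul_smul ((hN.smul (inv_pos.mpr hr)).add_posSemidef hA) hB hr.ne', smul_add,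
      smul_inv_smul₀ hr.ne']
  have ht0 : 0 < t := lt_of_le_of_lt hs hst
  rcases eq_or_lt_of_le (Set.mem_Ici.mp hs) with rfl | hs0
  · simpa only [zero_smul, logDetGain_zero_right] using
      logDetGain_pos (hN.add_posSemidef (hA.smul ht)) (hB.smul ht) (smul_ne_zero ht0.ne' hB0)
  · have hnoise : ((s⁻¹ • N + A) - (t⁻¹ • N + A)).PosDef := by
      rw [add_sub_add_right_eq_sub, ← sub_smul]
      exact hN.smul (sub_pos.mpr (inv_strictAnti₀ hs0 hst))
    simp only [hrescale hs0, hrescale ht0]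
    exact logDetGain_lt_logDetGain_of_posDef_sub
      ((hN.smul (inv_pos.mpr ht0)).add_posSemidef hA) hnoise hB hB0

end

theorem bmacRate_smul {L : ℕ} (m n : Fin L → ℕ)
    (H : ∀ l k : Fin L, Matrix (Fin (n l)) (Fin (m k)) ℂ) (Φ : Fin L → Fin L → ℝ)
    (S : ∀ k : Fin L, Matrix (Fin (m k)) (Fin (m k)) ℂ) (l : Fin L) (β : ℝ) :
    bmacRate m n H Φ (fun k => β • S k) l =
      logDetGain (1 + β • ∑ k : Fin L, Φ l k • (H l k * S k * (H l k)ᴴ))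
        (β • (H l l * S l * (H l l)ᴴ)) := by
  simp only [bmacRate, bmacOmega, logDetGain, RCLike.re_eq_complex_re, Finset.smul_sum,
    Matrix.mul_smul, Matrix.smul_mul, smul_comm β]

theorem stmt17_general {L : ℕ} (m n : Fin L → ℕ)
    (H : ∀ l k : Fin L, Matrix (Fin (n l)) (Fin (m k)) ℂ)
    (Φ : Fin L → Fin L → ℝ)
    (S : ∀ k : Fin L, Matrix (Fin (m k)) (Fin (m k)) ℂ)
    (hS : ∀ k, (S k).PosSemidef)
    (l : Fin L) (hΦ : ∀ k, 0 ≤ Φ l k) :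
    MonotoneOn (fun β : ℝ => bmacRate m n H Φ (fun k => β • S k) l) (Set.Ici 0) ∧
    (H l l * S l * (H l l)ᴴ ≠ 0 →
      StrictMonoOn (fun β : ℝ => bmacRate m n H Φ (fun k => β • S k) l) (Set.Ici 0)) := by
  have hinterference : (∑ k : Fin L, Φ l k • (H l k * S k * (H l k)ᴴ)).PosSemidef :=
    posSemidef_sum _ fun k _ => ((hS k).mul_mul_conjTranspose_same (H l k)).smul (hΦ k)
  have hsignal := (hS l).mul_mul_conjTranspose_same (H l l)
  simp only [bmacRate_smul]
  have hstrict := strictMonoOn_logDetGain_add_smul PosDef.one hinterference hsignal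
  refine ⟨?_, hstrict⟩
  by_cases hzero : H l l * S l * (H l l)ᴴ = 0
  · simp only [hzero, smul_zero, logDetGain_zero_right]
    exact monotoneOn_const
  · exact (hstrict hzero).monotoneOn

/-- Monotonicity of the link rate under uniform scaling of all input
covariance matrices, with strictness when the direct signal is nonzero. -/
theorem stmt17 {L : ℕ} (hL : 1 ≤ L) (m n : Fin L → ℕ)
    (H : ∀ l k : Fin L, Matrix (Fin (n l)) (Fin (m k)) ℂ)
    (Φ : Fin L → Fin L → ℝ)
    (hΦ : ∀ l k, Φ l k = 0 ∨ Φ l k = 1) (hΦd : ∀ l, Φ l l = 0)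
    (S : ∀ k : Fin L, Matrix (Fin (m k)) (Fin (m k)) ℂ)
    (hS : ∀ k, (S k).PosSemidef)
    (l : Fin L) (β₁ β₂ : ℝ) (hβ₁ : 0 ≤ β₁) (hβ : β₁ ≤ β₂) :
    bmacRate m n H Φ (fun k => β₁ • S k) l
      ≤ bmacRate m n H Φ (fun k => β₂ • S k) l ∧
    (β₁ < β₂ → H l l * S l * (H l l)ᴴ ≠ 0 →
      bmacRate m n H Φ (fun k => β₁ • S k) l
        < bmacRate m n H Φ (fun k => β₂ • S k) l) := by
  have h := stmt17_general m n H Φ S hS l fun k => (hΦ l k).elim Eq.ge fun h => h ▸ zero_le_one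
  exact ⟨h.1 hβ₁ (hβ₁.trans hβ) hβ, fun hlt hne => h.2 hne hβ₁ (hβ₁.trans hβ) hlt⟩
end
end
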